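/- arXiv:1909.07232 — 2 statements merged into one kernel-verified Lean document; each statement's English description precedes it below -/
import Mathlib

section
/- Let d ≥ 2 and let X be a random vector in ℝ^d distributed according to the multivariate Gaussian law with mean vector m and positive definite covariance matrix Σ = (σ_{jk}). Then for every 1 ≤ j ≤ d, E[(X_j − m_j)·X_j/|X|] = E[ σ_{jj}/|X| − (∑_{k=1}^{d} σ_{jk}·X_j·X_k)/|X|³ ], where |x| denotes the Euclidean norm on ℝ^d. -/
open Real MeasureTheory

/-- The multivariate Gaussian measure on `ℝ^d` (with the Euclidean structure), with mean
vector `m` and (positive definite) covariance matrix `S`, defined via its density with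
respect to the Lebesgue measure. -/
noncomputable def multiGaussian (d : ℕ) (m : EuclideanSpace ℝ (Fin d))
    (S : Matrix (Fin d) (Fin d) ℝ) : Measure (EuclideanSpace ℝ (Fin d)) :=
  volume.withDensity fun x => ENNReal.ofReal
    ((2 * Real.pi) ^ (-(d : ℝ) / 2) * S.det ^ (-(1 : ℝ) / 2) *
      Real.exp (-(∑ i, ∑ k, (x i - m i) * S⁻¹ i k * (x k - m k)) / 2))

lemma coercive_aux (d : ℕ) (A : Matrix (Fin d) (Fin d) ℝ) (hA : A.PosDef) :
    ∃ l : ℝ, 0 < l ∧ ∀ y : EuclideanSpace ℝ (Fin d),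
      l * ‖y‖ ^ 2 ≤ ∑ i, ∑ k, y i * A i k * y k := by
  have hpos : ∀ y : EuclideanSpace ℝ (Fin d), y ≠ 0 → 0 < ∑ i, ∑ k, y i * A i k * y k := by
    intro y hy
    have h := hA.dotProduct_mulVec_pos (x := (y : Fin d → ℝ)) (by
      intro h; apply hy; ext i; exact congrFun h i)
    simpa [dotProduct, Matrix.mulVec, Finset.mul_sum, mul_assoc] using h
  have hcont : Continuous fun y : EuclideanSpace ℝ (Fin d) => ∑ i, ∑ k, y i * A i k * y k := by
    fun_prop
  by_cases hne : (Metric.sphere (0 : EuclideanSpace ℝ (Fin d)) 1).Nonempty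
  · obtain ⟨z, hz, hmin⟩ := (isCompact_sphere (0 : EuclideanSpace ℝ (Fin d)) 1).exists_isMinOn hne
      hcont.continuousOn
    have hz1 : ‖z‖ = 1 := by simpa using hz
    refine ⟨_, hpos z (by rintro rfl; simp at hz1), fun y => ?_⟩
    by_cases hy : y = 0
    · subst hy; simp
    have hny : 0 < ‖y‖ := norm_pos_iff.mpr hy
    have h := hmin (a := ‖y‖⁻¹ • y) (by
      simp [norm_smul, hny.ne'])
    have h2 : ∑ i, ∑ k, (‖y‖⁻¹ • y) i * A i k * (‖y‖⁻¹ • y) k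
        = (∑ i, ∑ k, y i * A i k * y k) / ‖y‖ ^ 2 := by
      simp only [Finset.sum_div]
      refine Finset.sum_congr rfl fun i _ => Finset.sum_congr rfl fun k _ => ?_
      simp only [PiLp.smul_apply, smul_eq_mul]
      field_simp
    simp only [Set.mem_ofPred_eq] at h
    rw [h2] at h
    rwa [le_div_iff₀ (by positivity)] at h
  · refine ⟨1, one_pos, fun y => ?_⟩
    by_cases hy : y = 0
    · subst hy; simp
    · exfalso; apply hne
      exact ⟨‖y‖⁻¹ • y, by simp [norm_smul, hy]⟩

lemma radial_aux (d : ℕ) (hd : 2 ≤ d) (a : ℝ) (ha : 0 < a) :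
    Integrable (fun x : EuclideanSpace ℝ (Fin d) =>
      (‖x‖⁻¹ + 1 + ‖x‖) * exp (-a * ‖x‖ ^ 2)) := by
  have : Nonempty (Fin d) := ⟨⟨0, by omega⟩⟩
  have := (integrable_fun_norm_addHaar (volume : Measure (EuclideanSpace ℝ (Fin d)))
    (f := fun r : ℝ => (r⁻¹ + 1 + r) * exp (-a * r ^ 2)))
  refine this.2 ?_
  simp only [finrank_euclideanSpace, Fintype.card_fin]
  have hd' : (2 : ℝ) ≤ d := by exact_mod_cast hd
  have h1 := integrableOn_rpow_mul_exp_neg_mul_sq ha (s := (d : ℝ) - 2) (by linarith)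
  have h2 := integrableOn_rpow_mul_exp_neg_mul_sq ha (s := (d : ℝ) - 1) (by linarith)
  have h3 := integrableOn_rpow_mul_exp_neg_mul_sq ha (s := (d : ℝ)) (by linarith)
  refine ((h1.add h2).add h3).congr_fun ?_ measurableSet_Ioi
  intro r hr
  have hr : 0 < r := hr
  simp only [Pi.add_apply, smul_eq_mul]
  obtain ⟨n, rfl⟩ : ∃ n, d = n + 2 := ⟨d - 2, by omega⟩
  have e1 : (((n + 2 : ℕ) : ℝ) - 2) = (n : ℝ) := by push_cast; ring
  have e2 : (((n + 2 : ℕ) : ℝ) - 1) = ((n + 1 : ℕ) : ℝ) := by push_cast; ring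
  rw [e1, e2, rpow_natCast, rpow_natCast, rpow_natCast, show n + 2 - 1 = n + 1 from rfl]
  field_simp
  ring

lemma gauss_deriv_aux (d : ℕ) (m : EuclideanSpace ℝ (Fin d)) (S : Matrix (Fin d) (Fin d) ℝ)
    (hS : S.PosDef) (j : Fin d) (c : ℝ) (x : EuclideanSpace ℝ (Fin d)) :
    HasLineDerivAt ℝ (fun x : EuclideanSpace ℝ (Fin d) =>
        c * exp (-(∑ i, ∑ k, (x i - m i) * S⁻¹ i k * (x k - m k)) / 2))
      (-(x j - m j) * (c * exp (-(∑ i, ∑ k, (x i - m i) * S⁻¹ i k * (x k - m k)) / 2)))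
      x (WithLp.toLp 2 (fun k => S j k)) := by
  unfold HasLineDerivAt
  have hdet : IsUnit S.det := hS.isUnit.map Matrix.detMonoidHom
  have hsymm : ∀ i k, S i k = S k i := fun i k => by
    have := hS.isHermitian.apply i k
    simpa using this.symm
  have hA : ∀ k, ∑ i, S j i * S⁻¹ i k = if j = k then 1 else 0 := fun k => by
    have := congrFun (congrFun (Matrix.mul_nonsing_inv S hdet) j) k
    rwa [Matrix.mul_apply, Matrix.one_apply] at this
  have hB : ∀ i, ∑ k, S⁻¹ i k * S j k = if i = j then 1 else 0 := fun i => by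
    have := congrFun (congrFun (Matrix.nonsing_inv_mul S hdet) i) j
    rw [Matrix.mul_apply, Matrix.one_apply] at this
    rw [← this]
    exact Finset.sum_congr rfl fun k _ => by rw [hsymm j k]
  have hlin : ∀ i, HasDerivAt (fun t : ℝ => x i + t * S j i - m i) (S j i) 0 := fun i => by
    simpa using (((hasDerivAt_id (0:ℝ)).mul_const (S j i)).const_add (x i)).sub_const (m i)
  have hq : HasDerivAt (fun t : ℝ => ∑ i, ∑ k,
      (x i + t * S j i - m i) * S⁻¹ i k * (x k + t * S j k - m k)) (2 * (x j - m j)) 0 := by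
    have h := HasDerivAt.fun_sum (u := Finset.univ) fun i _ =>
      HasDerivAt.fun_sum (u := Finset.univ) fun k _ =>
        ((hlin i).mul_const (S⁻¹ i k)).mul (hlin k)
    refine h.congr_deriv ?_
    simp only [zero_mul, add_zero, Finset.sum_add_distrib]
    have e1 : ∑ i, ∑ k, S j i * S⁻¹ i k * (x k - m k) = x j - m j := by
      rw [Finset.sum_comm]
      simp only [← Finset.sum_mul, hA]
      simp
    have e2 : ∑ i, ∑ k, (x i - m i) * S⁻¹ i k * S j k = x j - m j := by
      simp only [mul_assoc, ← Finset.mul_sum, hB]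
      simp
    rw [e1, e2]
    ring
  have := (((hq.neg.div_const 2).exp).const_mul c)
  simp only [PiLp.add_apply, PiLp.smul_apply, smul_eq_mul]
  refine this.congr_deriv ?_
  simp
  ring

lemma f_deriv_aux (d : ℕ) (j : Fin d) (e : ℝ) (he : 0 < e) (x v : EuclideanSpace ℝ (Fin d)) :
    HasLineDerivAt ℝ (fun x : EuclideanSpace ℝ (Fin d) => x j / √(‖x‖ ^ 2 + e))
      (v j / √(‖x‖ ^ 2 + e) - x j * inner ℝ x v / √(‖x‖ ^ 2 + e) ^ 3) x v := by
  unfold HasLineDerivAt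
  have hlin : HasDerivAt (fun t : ℝ => x j + t * v j) (v j) 0 := by
    simpa using ((hasDerivAt_id (0:ℝ)).mul_const (v j)).const_add (x j)
  have hn : HasDerivAt (fun t : ℝ => ‖x + t • v‖ ^ 2) (2 * inner ℝ x v) 0 := by
    have h : HasDerivAt (fun t : ℝ => x + t • v) v 0 := by
      simpa using ((hasDerivAt_id (0:ℝ)).smul_const v).const_add x
    simpa using h.norm_sq
  have hR : 0 < ‖x‖ ^ 2 + e := by positivity
  have hs := (hn.add_const e).sqrt (by simpa using hR.ne')
  have hR' : 0 < √(‖x‖ ^ 2 + e) := sqrt_pos.2 hR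
  have := hlin.div hs (by simpa using hR'.ne')
  refine this.congr_deriv ?_
  simp only [zero_smul, add_zero, zero_mul]
  field_simp

lemma bound_aux (d : ℕ) (j : Fin d) (e : ℝ) (he : 0 < e) (x v : EuclideanSpace ℝ (Fin d))
    (hx : x ≠ 0) :
    |v j / √(‖x‖ ^ 2 + e) - x j * inner ℝ x v / √(‖x‖ ^ 2 + e) ^ 3| ≤ 2 * ‖v‖ * ‖x‖⁻¹ := by
  have hx' : 0 < ‖x‖ := norm_pos_iff.2 hx
  have hR : ‖x‖ ≤ √(‖x‖ ^ 2 + e) := le_sqrt_of_sq_le (by linarith)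
  set R := √(‖x‖ ^ 2 + e)
  have hR0 : 0 < R := hx'.trans_le hR
  have h1 : |v j / R| ≤ ‖v‖ * ‖x‖⁻¹ := by
    rw [abs_div, abs_of_pos hR0, ← div_eq_mul_inv]
    have := PiLp.norm_apply_le v j
    rw [Real.norm_eq_abs] at this
    gcongr
  have h2 : |x j * inner ℝ x v / R ^ 3| ≤ ‖v‖ * ‖x‖⁻¹ := by
    rw [abs_div, abs_mul, abs_of_pos (by positivity : 0 < R ^ 3)]
    have a1 := PiLp.norm_apply_le x j
    rw [Real.norm_eq_abs] at a1
    have a2 := abs_real_inner_le_norm x v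
    calc _ ≤ ‖x‖ * (‖x‖ * ‖v‖) / ‖x‖ ^ 3 := by gcongr
      _ = _ := by field_simp
  rw [abs_le] at h1 h2 ⊢
  constructor <;> linarith [h1.1, h1.2, h2.1, h2.2]

theorem stein_core (d : ℕ) (hd : 2 ≤ d)
    (m v : EuclideanSpace ℝ (Fin d)) (j : Fin d) (p : EuclideanSpace ℝ (Fin d) → ℝ)
    (hp : Continuous p) (C a : ℝ) (ha : 0 < a)
    (hpC : ∀ x, |p x| ≤ C * exp (-a * ‖x‖ ^ 2))
    (hpd : ∀ x, HasLineDerivAt ℝ p (-(x j - m j) * p x) x v) :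
    ∫ x, p x * ((x j - m j) * x j / ‖x‖)
      = ∫ x, p x * (v j / ‖x‖ - x j * inner ℝ x v / ‖x‖ ^ 3) := by
  have : Nonempty (Fin d) := ⟨⟨0, by omega⟩⟩
  have hne : ∀ᵐ x : EuclideanSpace ℝ (Fin d), x ≠ 0 := by
    simp [ae_iff]
  have hC : 0 ≤ C := by
    have := (abs_nonneg _).trans (hpC 0); simpa using this
  have hG := radial_aux d hd a ha
  have hbd : ∀ (K : ℝ) (g : ℝ) (x : EuclideanSpace ℝ (Fin d)),
      |g| ≤ K * (‖x‖⁻¹ + 1 + ‖x‖) →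
      ‖g * p x‖ ≤ K * C * ((‖x‖⁻¹ + 1 + ‖x‖) * exp (-a * ‖x‖ ^ 2)) := by
    intro K g x hg
    rw [norm_mul, Real.norm_eq_abs, Real.norm_eq_abs]
    calc _ ≤ (K * (‖x‖⁻¹ + 1 + ‖x‖)) * (C * exp (-a * ‖x‖ ^ 2)) :=
          mul_le_mul hg (hpC x) (abs_nonneg _) ((abs_nonneg _).trans hg)
      _ = _ := by ring
  have hint : ∀ (K : ℝ) (g : EuclideanSpace ℝ (Fin d) → ℝ), Measurable g →
      (∀ x, x ≠ 0 → |g x| ≤ K * (‖x‖⁻¹ + 1 + ‖x‖)) → Integrable (fun x => g x * p x) := by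
    intro K g hg h
    refine (hG.const_mul (K * C)).mono' (hg.mul hp.measurable).aestronglyMeasurable ?_
    filter_upwards [hne] with x hx
    exact hbd K (g x) x (h x hx)
  have hfb : ∀ e : ℝ, 0 < e → ∀ x : EuclideanSpace ℝ (Fin d), |x j / √(‖x‖ ^ 2 + e)| ≤ 1 := by
    intro e he x
    have hR : ‖x‖ ≤ √(‖x‖ ^ 2 + e) := le_sqrt_of_sq_le (by linarith)
    have a1 := PiLp.norm_apply_le x j
    rw [Real.norm_eq_abs] at a1
    rw [abs_div, abs_of_nonneg (sqrt_nonneg _)]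
    exact div_le_one_of_le₀ (a1.trans hR) (sqrt_nonneg _)
  have hxm : ∀ x : EuclideanSpace ℝ (Fin d), |x j - m j| ≤ ‖x‖ + ‖m‖ := by
    intro x
    have a1 := PiLp.norm_apply_le x j
    have a2 := PiLp.norm_apply_le m j
    rw [Real.norm_eq_abs] at a1 a2
    rw [abs_le] at a1 a2 ⊢
    constructor <;> linarith [a1.1, a1.2, a2.1, a2.2]
  have hb1 : ∀ e : ℝ, 0 < e → ∀ x : EuclideanSpace ℝ (Fin d),
      |-(x j / √(‖x‖ ^ 2 + e) * (x j - m j))| ≤ (1 + ‖m‖) * (‖x‖⁻¹ + 1 + ‖x‖) := by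
    intro e he x
    rw [abs_neg, abs_mul]
    have h0 : 0 ≤ ‖x‖⁻¹ := by positivity
    have h1 : 0 ≤ ‖m‖ * ‖x‖⁻¹ := by positivity
    have h2 : 0 ≤ ‖m‖ * ‖x‖ := by positivity
    calc _ ≤ 1 * (‖x‖ + ‖m‖) := mul_le_mul (hfb e he x) (hxm x) (abs_nonneg _) zero_le_one
      _ ≤ _ := by nlinarith
  have hb2 : ∀ e : ℝ, 0 < e → ∀ x : EuclideanSpace ℝ (Fin d), x ≠ 0 →
      |v j / √(‖x‖ ^ 2 + e) - x j * inner ℝ x v / √(‖x‖ ^ 2 + e) ^ 3|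
        ≤ (2 * ‖v‖) * (‖x‖⁻¹ + 1 + ‖x‖) := by
    intro e he x hx
    refine (bound_aux d j e he x v hx).trans ?_
    gcongr
    linarith [norm_nonneg x]
  have key : ∀ e : ℝ, 0 < e →
      ∫ x, (-(x j / √(‖x‖ ^ 2 + e) * (x j - m j))) * p x
       = - ∫ x, (v j / √(‖x‖ ^ 2 + e) - x j * inner ℝ x v / √(‖x‖ ^ 2 + e) ^ 3) * p x := by
    intro e he
    have h := integral_bilinear_hasLineDerivAt_right_eq_neg_left_of_integrable
      (μ := (volume : Measure (EuclideanSpace ℝ (Fin d))))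
      (f := fun x => x j / √(‖x‖ ^ 2 + e))
      (f' := fun x => v j / √(‖x‖ ^ 2 + e) - x j * inner ℝ x v / √(‖x‖ ^ 2 + e) ^ 3)
      (g := p) (g' := fun x => -(x j - m j) * p x) (v := v)
      (B := ContinuousLinearMap.mul ℝ ℝ)
      (by
        simp only [ContinuousLinearMap.mul_apply']
        exact hint (2 * ‖v‖) _ (by fun_prop) (hb2 e he))
      (by
        simp only [ContinuousLinearMap.mul_apply']
        refine (hint (1 + ‖m‖) (fun x => -(x j / √(‖x‖ ^ 2 + e) * (x j - m j)))
          (by fun_prop) (fun x _ => hb1 e he x)).congr (.of_forall fun x => ?_)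
        simp only; ring)
      (by
        simp only [ContinuousLinearMap.mul_apply']
        refine hint 1 _ (by fun_prop) (fun x _ => (hfb e he x).trans ?_)
        have h0 : 0 ≤ ‖x‖⁻¹ := by positivity
        linarith [norm_nonneg x])
      (fun x _ => f_deriv_aux d j e he x v) (fun x _ => hpd x)
    simp only [ContinuousLinearMap.mul_apply'] at h
    rw [← h]
    congr 1; ext x; ring
  let en : ℕ → ℝ := fun n => 1 / ((n : ℝ) + 1)
  have hen : ∀ n, 0 < en n := fun n => by positivity
  have hsq : ∀ x : EuclideanSpace ℝ (Fin d),
      Filter.Tendsto (fun n => √(‖x‖ ^ 2 + en n)) Filter.atTop (nhds ‖x‖) := by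
    intro x
    have h := ((tendsto_one_div_add_atTop_nhds_zero_nat (𝕜 := ℝ)).const_add (‖x‖ ^ 2)).sqrt
    simpa [en] using h
  have L1 : Filter.Tendsto
      (fun n => ∫ x, (-(x j / √(‖x‖ ^ 2 + en n) * (x j - m j))) * p x) Filter.atTop
      (nhds (∫ x : EuclideanSpace ℝ (Fin d), (-(x j / ‖x‖ * (x j - m j))) * p x)) := by
    refine tendsto_integral_of_dominated_convergence _ (fun n => ?_)
      (hG.const_mul ((1 + ‖m‖) * C)) (fun n => .of_forall fun x => hbd _ _ x (hb1 _ (hen n) x)) ?_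
    · exact Measurable.aestronglyMeasurable (by fun_prop)
    · filter_upwards [hne] with x hx
      exact (((tendsto_const_nhds.div (hsq x) (norm_ne_zero_iff.2 hx)).mul_const _).neg).mul_const _
  have L2 : Filter.Tendsto
      (fun n => ∫ x, (v j / √(‖x‖ ^ 2 + en n) - x j * inner ℝ x v / √(‖x‖ ^ 2 + en n) ^ 3) * p x)
      Filter.atTop
      (nhds (∫ x : EuclideanSpace ℝ (Fin d),
        (v j / ‖x‖ - x j * inner ℝ x v / ‖x‖ ^ 3) * p x)) := by
    refine tendsto_integral_of_dominated_convergence _ (fun n => ?_)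
      (hG.const_mul ((2 * ‖v‖) * C)) (fun n => ?_) ?_
    · exact Measurable.aestronglyMeasurable (by fun_prop)
    · filter_upwards [hne] with x hx
      exact hbd _ _ x (hb2 _ (hen n) x hx)
    · filter_upwards [hne] with x hx
      have hx' := norm_ne_zero_iff.2 hx
      exact ((tendsto_const_nhds.div (hsq x) hx').sub
        (tendsto_const_nhds.div ((hsq x).pow 3) (pow_ne_zero 3 hx'))).mul_const _
  have hfin := tendsto_nhds_unique (L1.congr fun n => key _ (hen n)) L2.neg
  rw [← neg_inj] at hfin
  rw [neg_neg, ← integral_neg] at hfin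
  refine Eq.trans ?_ (hfin.trans ?_)
  · congr 1; ext x; ring
  · congr 1; ext x; ring

/-- Stein-type identity for the function `x ↦ x_j / |x|` under a nondegenerate multivariate
Gaussian distribution with mean `m` and covariance matrix `Σ = (σ_{jk})`:
`E[(X_j - m_j) X_j / |X|] = E[σ_{jj}/|X| - (∑_k σ_{jk} X_j X_k)/|X|³]`. -/
theorem stein_identity_gaussian (d : ℕ) (hd : 2 ≤ d)
    (m : EuclideanSpace ℝ (Fin d)) (S : Matrix (Fin d) (Fin d) ℝ)
    (hS : S.PosDef) (j : Fin d) :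
    ∫ x, (x j - m j) * x j / ‖x‖ ∂(multiGaussian d m S)
      = ∫ x, (S j j / ‖x‖ - (∑ k, S j k * x j * x k) / ‖x‖ ^ 3)
          ∂(multiGaussian d m S) := by
  unfold multiGaussian
  have hc : 0 ≤ (2 * Real.pi) ^ (-(d : ℝ) / 2) * S.det ^ (-(1 : ℝ) / 2) := by
    have := hS.det_pos
    positivity
  generalize (2 * Real.pi) ^ (-(d : ℝ) / 2) * S.det ^ (-(1 : ℝ) / 2) = c at hc
  have hcont : Continuous fun x : EuclideanSpace ℝ (Fin d) =>
      c * exp (-(∑ i, ∑ k, (x i - m i) * S⁻¹ i k * (x k - m k)) / 2) := by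
    fun_prop
  rw [integral_withDensity_eq_integral_toReal_smul (by fun_prop) (by simp),
    integral_withDensity_eq_integral_toReal_smul (by fun_prop) (by simp)]
  have hto : ∀ x : EuclideanSpace ℝ (Fin d), (ENNReal.ofReal
      (c * exp (-(∑ i, ∑ k, (x i - m i) * S⁻¹ i k * (x k - m k)) / 2))).toReal
      = c * exp (-(∑ i, ∑ k, (x i - m i) * S⁻¹ i k * (x k - m k)) / 2) := fun x =>
    ENNReal.toReal_ofReal (by positivity)
  simp only [hto, smul_eq_mul]
  obtain ⟨l, hl, hlb⟩ := coercive_aux d S⁻¹ hS.inv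
  have h := stein_core d hd m (WithLp.toLp 2 (fun k => S j k)) j _ hcont
    (c * exp (l / 2 * ‖m‖ ^ 2)) (l / 4) (by positivity) (fun x => by
      rw [abs_of_nonneg (by positivity), mul_assoc, ← exp_add]
      gcongr
      have h1 := hlb (x - m)
      simp only [PiLp.sub_apply] at h1
      have h2 : ‖x‖ ≤ ‖x - m‖ + ‖m‖ := by
        simpa using norm_add_le (x - m) m
      have h3 : ‖x‖ ^ 2 ≤ 2 * ‖x - m‖ ^ 2 + 2 * ‖m‖ ^ 2 := by
        nlinarith [sq_nonneg (‖x - m‖ - ‖m‖), norm_nonneg x]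
      nlinarith) (gauss_deriv_aux d m S hS j c)
  rw [h]
  congr 1; ext x
  congr 3
  simp only [PiLp.inner_apply, Finset.mul_sum]
  refine Finset.sum_congr rfl fun k _ => ?_
  simp
  ring
end

section
/- Let d ≥ 2, let X be a random vector in ℝ^d distributed according to the multivariate Gaussian law with mean vector m and positive definite covariance matrix Σ, and let c > 0. Then E|(1 − c/|X|)·X − m|² ≤ E|X − m|² + c² − 2c·(tr Σ − λ_max(Σ))·E[1/|X|], where λ_max(Σ) is the largest eigenvalue of Σ and |x| is the Euclidean norm on ℝ^d. -/
open Real MeasureTheory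

open scoped MatrixOrder in
lemma factor_L {d : ℕ} {S : Matrix (Fin d) (Fin d) ℝ} (hS : S.PosDef) :
    ∃ L R : EuclideanSpace ℝ (Fin d) →L[ℝ] EuclideanSpace ℝ (Fin d),
      (∀ y, R (L y) = y) ∧
      (∀ y z : EuclideanSpace ℝ (Fin d), ∑ i, ∑ k, y i * S⁻¹ i k * z k = inner ℝ (L y) (L z)) ∧
      LinearMap.det (L : EuclideanSpace ℝ (Fin d) →ₗ[ℝ] EuclideanSpace ℝ (Fin d)) ≠ 0 ∧
      |LinearMap.det (L : EuclideanSpace ℝ (Fin d) →ₗ[ℝ] EuclideanSpace ℝ (Fin d))|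
        = S.det ^ (-(1 : ℝ) / 2) := by
  obtain ⟨B, hB, hBB⟩ := CStarAlgebra.isStrictlyPositive_iff_eq_star_mul_self.mp
    hS.inv.isStrictlyPositive
  have hdetB : IsUnit B.det := (Matrix.isUnit_iff_isUnit_det B).mp hB
  have hdet : LinearMap.det (Matrix.toEuclideanCLM (n := Fin d) (𝕜 := ℝ) B :
      EuclideanSpace ℝ (Fin d) →ₗ[ℝ] EuclideanSpace ℝ (Fin d)) = B.det := by
    rw [Matrix.coe_toEuclideanCLM_eq_toEuclideanLin, Matrix.toEuclideanLin, Matrix.toLpLin_eq_toLin,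
      LinearMap.det_toLin]
  have hST : B.transpose * B = S⁻¹ := by
    rw [hBB, Matrix.star_eq_conjTranspose, Matrix.conjTranspose_eq_transpose_of_trivial]
  refine ⟨Matrix.toEuclideanCLM (n := Fin d) (𝕜 := ℝ) B,
    Matrix.toEuclideanCLM (n := Fin d) (𝕜 := ℝ) B⁻¹, ?_, ?_, ?_, ?_⟩
  · intro y
    rw [← mul_apply_eq_comp, ← map_mul, Matrix.nonsing_inv_mul _ hdetB, map_one]
    rfl
  · intro y z
    rw [← hST, EuclideanSpace.inner_eq_star_dotProduct, Matrix.ofLp_toEuclideanCLM,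
      Matrix.ofLp_toEuclideanCLM, star_trivial, dotProduct_comm,
      ← Matrix.vecMul_transpose, ← Matrix.dotProduct_mulVec, Matrix.mulVec_mulVec]
    simp [dotProduct, Matrix.mulVec, Finset.mul_sum, mul_assoc]
  · rw [hdet]; exact hdetB.ne_zero
  · rw [hdet]
    have h1 : B.det * B.det = S.det⁻¹ := by
      rw [← Ring.inverse_eq_inv', ← Matrix.det_nonsing_inv, ← hST, Matrix.det_mul,
        Matrix.det_transpose]
    have h2 : |B.det| = √(S.det⁻¹) := by
      rw [← h1, Real.sqrt_mul_self_eq_abs]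
    rw [h2, Real.sqrt_eq_rpow, Real.inv_rpow hS.det_pos.le, ← Real.rpow_neg hS.det_pos.le]
    norm_num

lemma gauss_L {d : ℕ} (L : EuclideanSpace ℝ (Fin d) →L[ℝ] EuclideanSpace ℝ (Fin d))
    (hL : LinearMap.det (L : EuclideanSpace ℝ (Fin d) →ₗ[ℝ] EuclideanSpace ℝ (Fin d)) ≠ 0)
    {b : ℝ} (hb : 0 < b) (m : EuclideanSpace ℝ (Fin d)) :
    Integrable (fun x => Real.exp (-b * ‖L (x - m)‖ ^ 2)) ∧
    ∫ x, Real.exp (-b * ‖L (x - m)‖ ^ 2) =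
      |LinearMap.det (L : EuclideanSpace ℝ (Fin d) →ₗ[ℝ] EuclideanSpace ℝ (Fin d))|⁻¹
        * (π / b) ^ ((d : ℝ) / 2) := by
  have hm := Measure.map_linearMap_addHaar_eq_smul_addHaar
    (volume : Measure (EuclideanSpace ℝ (Fin d))) hL
  have hc : Continuous (fun x : EuclideanSpace ℝ (Fin d) => Real.exp (-b * ‖x‖ ^ 2)) := by
    fun_prop
  have h1 : ∫ x, Real.exp (-b * ‖L (x - m)‖ ^ 2) =
      |LinearMap.det (L : EuclideanSpace ℝ (Fin d) →ₗ[ℝ] EuclideanSpace ℝ (Fin d))|⁻¹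
        * (π / b) ^ ((d : ℝ) / 2) := by
    rw [integral_sub_right_eq_self (fun x => Real.exp (-b * ‖L x‖ ^ 2)) m]
    have h2 := integral_map (μ := (volume : Measure (EuclideanSpace ℝ (Fin d))))
      (φ := (L : EuclideanSpace ℝ (Fin d) →ₗ[ℝ] EuclideanSpace ℝ (Fin d)))
      (L.continuous.measurable.aemeasurable) (f := fun x => Real.exp (-b * ‖x‖ ^ 2))
      hc.aestronglyMeasurable
    rw [hm, integral_smul_measure, GaussianFourier.integral_rexp_neg_mul_sq_norm hb] at h2
    simp only [ContinuousLinearMap.coe_coe] at h2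
    rw [← h2, ENNReal.toReal_ofReal (abs_nonneg _), abs_inv]
    simp
  refine ⟨?_, h1⟩
  by_contra hn
  rw [integral_undef hn] at h1
  have : 0 < |LinearMap.det (L : EuclideanSpace ℝ (Fin d) →ₗ[ℝ] EuclideanSpace ℝ (Fin d))|⁻¹
        * (π / b) ^ ((d : ℝ) / 2) := by
    have := abs_pos.mpr hL
    have := Real.pi_pos
    positivity
  linarith

/-- the density -/
noncomputable def gpdf (d : ℕ) (m : EuclideanSpace ℝ (Fin d))
    (S : Matrix (Fin d) (Fin d) ℝ) (x : EuclideanSpace ℝ (Fin d)) : ℝ :=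
    ((2 * Real.pi) ^ (-(d : ℝ) / 2) * S.det ^ (-(1 : ℝ) / 2) *
      Real.exp (-(∑ i, ∑ k, (x i - m i) * S⁻¹ i k * (x k - m k)) / 2))

lemma gpdf_cont (d : ℕ) (m : EuclideanSpace ℝ (Fin d))
    (S : Matrix (Fin d) (Fin d) ℝ) : Continuous (gpdf d m S) := by
  unfold gpdf
  fun_prop

lemma gpdf_nonneg {d : ℕ} (m : EuclideanSpace ℝ (Fin d))
    {S : Matrix (Fin d) (Fin d) ℝ} (hS : S.PosDef) (x) : 0 ≤ gpdf d m S x := by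
  unfold gpdf
  have := hS.det_pos
  have := Real.pi_pos
  positivity

lemma gpdf_int {d : ℕ} (m : EuclideanSpace ℝ (Fin d))
    {S : Matrix (Fin d) (Fin d) ℝ} (hS : S.PosDef) :
    Integrable (gpdf d m S) ∧ ∫ x, gpdf d m S x = 1 ∧
      Integrable (fun x => gpdf d m S x * ‖x - m‖ ^ 2) := by
  obtain ⟨L, R, hRL, hq, hdet, hdet'⟩ := factor_L hS
  have hpi := Real.pi_pos
  have hSd := hS.det_pos
  have hp : ∀ x, gpdf d m S x = ((2 * Real.pi) ^ (-(d : ℝ) / 2) * S.det ^ (-(1 : ℝ) / 2)) *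
      Real.exp (-(1/2) * ‖L (x - m)‖ ^ 2) := by
    intro x
    have := hq (x - m) (x - m)
    simp only [PiLp.sub_apply, real_inner_self_eq_norm_sq] at this
    rw [gpdf, this]
    ring_nf
  obtain ⟨i1, v1⟩ := gauss_L L hdet (b := 1/2) (by norm_num) m
  obtain ⟨i2, -⟩ := gauss_L L hdet (b := 1/4) (by norm_num) m
  refine ⟨?_, ?_, ?_⟩
  · simp_rw [funext hp]
    exact i1.const_mul _
  · simp_rw [hp]
    rw [integral_const_mul, v1, hdet']
    have e1 : (π / (1/2)) = 2 * π := by ring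
    rw [e1, neg_div (2:ℝ) (d:ℝ), Real.rpow_neg (by positivity)]
    have : (0:ℝ) < S.det ^ (-(1 : ℝ) / 2) := by positivity
    have : (0:ℝ) < (2 * π) ^ ((d : ℝ) / 2) := by positivity
    field_simp
  · refine ((i2.const_mul (((2 * Real.pi) ^ (-(d : ℝ) / 2) * S.det ^ (-(1 : ℝ) / 2)) *
      (‖R‖ ^ 2 * 4)))).mono' ?_ ?_
    · exact ((gpdf_cont d m S).mul (by fun_prop)).aestronglyMeasurable
    · refine Filter.Eventually.of_forall fun x => ?_
      rw [Real.norm_of_nonneg (mul_nonneg (gpdf_nonneg m hS x) (by positivity)), hp]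
      have hC : 0 < (2 * Real.pi) ^ (-(d : ℝ) / 2) * S.det ^ (-(1 : ℝ) / 2) := by positivity
      rw [mul_assoc _ (rexp _), mul_assoc _ (‖R‖ ^ 2 * 4)]
      refine mul_le_mul_of_nonneg_left ?_ hC.le
      have h1 : ‖x - m‖ ≤ ‖R‖ * ‖L (x - m)‖ := by
        conv_lhs => rw [← hRL (x - m)]
        exact R.le_opNorm _
      set t := ‖L (x - m)‖
      have h2 : ‖x - m‖ ^ 2 ≤ ‖R‖ ^ 2 * t ^ 2 := by
        rw [← mul_pow]; gcongr
      have h3 : t ^ 2 ≤ 4 * Real.exp (1/4 * t ^ 2) := by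
        have := Real.add_one_le_exp (1/4 * t ^ 2); linarith
      have h4 : Real.exp (-(1/2) * t ^ 2) * Real.exp (1/4 * t^2) = Real.exp (-(1/4) * t ^ 2) := by
        rw [← Real.exp_add]; ring_nf
      calc Real.exp (-(1/2) * t ^ 2) * ‖x - m‖ ^ 2
          ≤ Real.exp (-(1/2) * t ^ 2) * (‖R‖ ^ 2 * (4 * Real.exp (1/4 * t ^ 2))) := by
            gcongr
            exact h2.trans (by gcongr)
        _ = ‖R‖ ^ 2 * 4 * (Real.exp (-(1/2) * t ^ 2) * Real.exp (1/4 * t^2)) := by ring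
        _ = _ := by rw [h4]

lemma quad_le {d : ℕ} {S : Matrix (Fin d) (Fin d) ℝ} (hS : S.PosDef)
    (x : EuclideanSpace ℝ (Fin d)) :
    ∑ i, x i * (∑ k, S i k * x k) ≤ (⨆ i, hS.1.eigenvalues i) * ‖x‖ ^ 2 := by
  have h1 : ∀ j, inner ℝ (WithLp.toLp 2 (S.mulVec x)) (hS.1.eigenvectorBasis j)
      = hS.1.eigenvalues j * inner ℝ x (hS.1.eigenvectorBasis j) := by
    intro j
    have := hS.1.mulVec_eigenvectorBasis j
    have hT : S.transpose = S := by
      have := hS.1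
      rwa [Matrix.IsHermitian, Matrix.conjTranspose_eq_transpose_of_trivial] at this
    rw [EuclideanSpace.inner_eq_star_dotProduct, EuclideanSpace.inner_eq_star_dotProduct]
    simp only [star_trivial]
    have h3 : ∀ v : Fin d → ℝ, Matrix.vecMul v S = S.mulVec v := by
      intro v
      conv_lhs => rw [← hT]
      exact Matrix.vecMul_transpose _ _
    rw [Matrix.dotProduct_mulVec, h3, this, smul_dotProduct, smul_eq_mul]
  have h2 : ∑ i, x i * (∑ k, S i k * x k) = inner ℝ (WithLp.toLp 2 (S.mulVec x)) x := by
    rw [EuclideanSpace.inner_eq_star_dotProduct]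
    simp [dotProduct, Matrix.mulVec]
  rw [h2, ← hS.1.eigenvectorBasis.sum_inner_mul_inner, ← real_inner_self_eq_norm_sq,
    ← hS.1.eigenvectorBasis.sum_inner_mul_inner, Finset.mul_sum]
  refine Finset.sum_le_sum fun j _ => ?_
  rw [h1, mul_assoc]
  refine mul_le_mul_of_nonneg_right (le_ciSup (Set.finite_range _).bddAbove j) ?_
  rw [real_inner_comm]
  exact mul_self_nonneg _

lemma trace_sub_nonneg {d : ℕ} (hd : 2 ≤ d) {S : Matrix (Fin d) (Fin d) ℝ} (hS : S.PosDef) :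
    0 ≤ S.trace - ⨆ i, hS.1.eigenvalues i := by
  have : Nonempty (Fin d) := ⟨⟨0, by omega⟩⟩
  rw [hS.1.trace_eq_sum_eigenvalues, sub_nonneg]
  refine ciSup_le fun i => ?_
  exact Finset.single_le_sum (f := fun i => hS.1.eigenvalues i)
    (fun j _ => (hS.eigenvalues_pos j).le) (Finset.mem_univ i)

lemma multiGaussian_integral {d : ℕ} (m : EuclideanSpace ℝ (Fin d))
    {S : Matrix (Fin d) (Fin d) ℝ} (hS : S.PosDef) (f : EuclideanSpace ℝ (Fin d) → ℝ) :
    ∫ x, f x ∂(multiGaussian d m S) = ∫ x, gpdf d m S x * f x := by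
  have := integral_withDensity_eq_integral_toReal_smul
    (μ := (volume : Measure (EuclideanSpace ℝ (Fin d))))
    (f := fun x => ENNReal.ofReal (gpdf d m S x))
    (gpdf_cont d m S).measurable.ennreal_ofReal (by simp) f
  simp only [ENNReal.toReal_ofReal (gpdf_nonneg m hS _), smul_eq_mul] at this
  exact this

lemma multiGaussian_integrable {d : ℕ} (m : EuclideanSpace ℝ (Fin d))
    {S : Matrix (Fin d) (Fin d) ℝ} (hS : S.PosDef) (f : EuclideanSpace ℝ (Fin d) → ℝ) :
    Integrable f (multiGaussian d m S) ↔ Integrable (fun x => gpdf d m S x * f x) := by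
  have := integrable_withDensity_iff_integrable_smul'
    (μ := (volume : Measure (EuclideanSpace ℝ (Fin d))))
    (f := fun x => ENNReal.ofReal (gpdf d m S x))
    (gpdf_cont d m S).measurable.ennreal_ofReal (by simp) (g := f)
  simp only [ENNReal.toReal_ofReal (gpdf_nonneg m hS _), smul_eq_mul] at this
  exact this

lemma int_one {d : ℕ} (m : EuclideanSpace ℝ (Fin d))
    {S : Matrix (Fin d) (Fin d) ℝ} (hS : S.PosDef) :
    IsProbabilityMeasure (multiGaussian d m S) := by
  obtain ⟨h1, h2, -⟩ := gpdf_int m hS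
  have hi : Integrable (fun _ => (1:ℝ)) (multiGaussian d m S) := by
    rw [multiGaussian_integrable m hS]; simpa using h1
  have hfin : IsFiniteMeasure (multiGaussian d m S) := by
    have := (integrable_const_iff (c := (1:ℝ))).mp hi
    simpa using this
  have h3 := multiGaussian_integral m hS (fun _ => (1:ℝ))
  simp only [mul_one, h2] at h3
  rw [integral_const, smul_eq_mul, mul_one] at h3
  constructor
  rw [Measure.real, ENNReal.toReal_eq_one_iff] at h3
  exact h3

lemma int_dom {d : ℕ} (m : EuclideanSpace ℝ (Fin d))
    {S : Matrix (Fin d) (Fin d) ℝ} (hS : S.PosDef) {f : EuclideanSpace ℝ (Fin d) → ℝ}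
    (hf : Measurable f) (K : ℝ) (hK : ∀ x, |f x| ≤ K * (1 + ‖x - m‖ ^ 2)) :
    Integrable f (multiGaussian d m S) := by
  have := int_one m hS
  have h2 : Integrable (fun x => ‖x - m‖ ^ 2) (multiGaussian d m S) := by
    rw [multiGaussian_integrable m hS]
    exact (gpdf_int m hS).2.2
  exact (((integrable_const (1:ℝ)).add h2).const_mul K).mono' hf.aestronglyMeasurable
    (Filter.Eventually.of_forall hK)

lemma gpdf_deriv {d : ℕ} (m : EuclideanSpace ℝ (Fin d))
    {S : Matrix (Fin d) (Fin d) ℝ} (hS : S.PosDef) (x : EuclideanSpace ℝ (Fin d)) (i : Fin d) :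
    HasLineDerivAt ℝ (gpdf d m S) (-(x i - m i) * gpdf d m S x) x
      (WithLp.toLp 2 (fun k => S k i)) := by
  obtain ⟨L, R, hRL, hq, hdet, hdet'⟩ := factor_L hS
  set v : EuclideanSpace ℝ (Fin d) := WithLp.toLp 2 (fun k => S k i) with hv
  have hin : inner ℝ (L (x - m)) (L v) = x i - m i := by
    rw [← hq]
    have hinv : S⁻¹ * S = 1 := Matrix.nonsing_inv_mul _ (hS.det_pos.ne'.isUnit)
    have : ∀ a, ∑ k, (x - m) a * S⁻¹ a k * v k = (x - m) a * (1 : Matrix (Fin d) (Fin d) ℝ) a i := by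
      intro a
      rw [← hinv, Matrix.mul_apply, Finset.mul_sum]
      simp [hv, mul_assoc]
    simp_rw [this]
    simp [Matrix.one_apply]
  have hp : ∀ x, gpdf d m S x = ((2 * Real.pi) ^ (-(d : ℝ) / 2) * S.det ^ (-(1 : ℝ) / 2)) *
      Real.exp (-(1/2) * ‖L (x - m)‖ ^ 2) := by
    intro x
    have := hq (x - m) (x - m)
    simp only [PiLp.sub_apply, real_inner_self_eq_norm_sq] at this
    rw [gpdf, this]
    ring_nf
  unfold HasLineDerivAt
  have e : (fun t : ℝ => gpdf d m S (x + t • v)) = fun t =>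
      ((2 * Real.pi) ^ (-(d : ℝ) / 2) * S.det ^ (-(1 : ℝ) / 2)) *
      Real.exp (-(1/2) * (‖L (x - m)‖ ^ 2 + 2 * t * (x i - m i) + t ^ 2 * ‖L v‖ ^ 2)) := by
    funext t
    rw [hp]
    have : L (x + t • v - m) = L (x - m) + t • L v := by
      rw [← map_smul, ← map_add]; congr 1; abel
    rw [this, norm_add_sq_real, inner_smul_right, hin, norm_smul, mul_pow]
    simp only [Real.norm_eq_abs, sq_abs]
    ring_nf
  rw [e]
  have h1 : HasDerivAt (fun t : ℝ =>
      -(1/2) * (‖L (x - m)‖ ^ 2 + 2 * t * (x i - m i) + t ^ 2 * ‖L v‖ ^ 2))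
      (-(x i - m i)) 0 := by
    have a1 : HasDerivAt (fun t : ℝ => 2 * t * (x i - m i)) (2 * (x i - m i)) 0 := by
      simpa using ((hasDerivAt_id (0:ℝ)).const_mul 2).mul_const (x i - m i)
    have a2 : HasDerivAt (fun t : ℝ => t ^ 2 * ‖L v‖ ^ 2) 0 0 := by
      simpa using ((hasDerivAt_id (0:ℝ)).pow 2).mul_const (‖L v‖ ^ 2)
    refine (((a1.const_add (‖L (x - m)‖ ^ 2)).add a2).const_mul (-(1/2))).congr_deriv ?_
    ring
  refine ((h1.exp).const_mul
    ((2 * Real.pi) ^ (-(d : ℝ) / 2) * S.det ^ (-(1 : ℝ) / 2))).congr_deriv ?_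
  rw [hp]
  simp
  ring

lemma g_deriv {d : ℕ} {e : ℝ} (he : 0 < e) (x v : EuclideanSpace ℝ (Fin d)) (i : Fin d) :
    HasLineDerivAt ℝ (fun x : EuclideanSpace ℝ (Fin d) => x i / √(‖x‖ ^ 2 + e))
      (v i / √(‖x‖ ^ 2 + e) - x i * inner ℝ x v / √(‖x‖ ^ 2 + e) ^ 3) x v := by
  unfold HasLineDerivAt
  have e1 : (fun t : ℝ => (x + t • v) i / √(‖x + t • v‖ ^ 2 + e)) = fun t =>
      (x i + t * v i) / √(‖x‖ ^ 2 + 2 * t * inner ℝ x v + t ^ 2 * ‖v‖ ^ 2 + e) := by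
    funext t
    rw [norm_add_sq_real, inner_smul_right, norm_smul, mul_pow]
    simp only [Real.norm_eq_abs, sq_abs, PiLp.add_apply, PiLp.smul_apply, smul_eq_mul]
    ring_nf
  rw [e1]
  have hpos : 0 < ‖x‖ ^ 2 + e := by positivity
  have a0 : HasDerivAt (fun t : ℝ => x i + t * v i) (v i) 0 := by
    simpa using ((hasDerivAt_id (0:ℝ)).mul_const (v i)).const_add (x i)
  have a1 : HasDerivAt (fun t : ℝ => 2 * t * inner ℝ x v) (2 * inner ℝ x v) 0 := by
    simpa using ((hasDerivAt_id (0:ℝ)).const_mul 2).mul_const (inner ℝ x v)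
  have a2 : HasDerivAt (fun t : ℝ => t ^ 2 * ‖v‖ ^ 2) 0 0 := by
    simpa using ((hasDerivAt_id (0:ℝ)).pow 2).mul_const (‖v‖ ^ 2)
  have a3 : HasDerivAt (fun t : ℝ => ‖x‖ ^ 2 + 2 * t * inner ℝ x v + t ^ 2 * ‖v‖ ^ 2 + e)
      (2 * inner ℝ x v) 0 := by
    simpa using ((a1.const_add (‖x‖ ^ 2)).add a2).add_const e
  have a4 := a3.sqrt (by simpa using hpos.ne')
  have hs : 0 < √(‖x‖ ^ 2 + e) := Real.sqrt_pos.mpr hpos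
  have a5 := a0.div a4 (by simpa using hs.ne')
  refine a5.congr_deriv ?_
  simp
  field_simp

lemma stein {d : ℕ} (m : EuclideanSpace ℝ (Fin d))
    {S : Matrix (Fin d) (Fin d) ℝ} (hS : S.PosDef) {e : ℝ} (he : 0 < e) (i : Fin d) :
    Integrable (fun x => (x i - m i) * (x i / √(‖x‖ ^ 2 + e))) (multiGaussian d m S) ∧
    Integrable (fun x => S i i / √(‖x‖ ^ 2 + e) -
      x i * (∑ k, S i k * x k) / √(‖x‖ ^ 2 + e) ^ 3) (multiGaussian d m S) ∧
    ∫ x, (x i - m i) * (x i / √(‖x‖ ^ 2 + e)) ∂(multiGaussian d m S) =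
    ∫ x, (S i i / √(‖x‖ ^ 2 + e) -
      x i * (∑ k, S i k * x k) / √(‖x‖ ^ 2 + e) ^ 3) ∂(multiGaussian d m S) := by
  set v : EuclideanSpace ℝ (Fin d) := WithLp.toLp 2 (fun k => S k i) with hv
  have hsym : ∀ k, S k i = S i k := fun k => by
    simpa using hS.1.apply i k
  have hinv : ∀ x : EuclideanSpace ℝ (Fin d), inner ℝ x v = ∑ k, S i k * x k := by
    intro x
    rw [EuclideanSpace.inner_eq_star_dotProduct]
    simp [dotProduct, hv, hsym]
  have hvi : v i = S i i := by simp [hv]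
  have hs1 : ∀ x : EuclideanSpace ℝ (Fin d), ‖x‖ ≤ √(‖x‖ ^ 2 + e) := fun x =>
    Real.le_sqrt_of_sq_le (by linarith)
  have hse : ∀ x : EuclideanSpace ℝ (Fin d), √e ≤ √(‖x‖ ^ 2 + e) := fun x =>
    Real.sqrt_le_sqrt (by nlinarith [sq_nonneg ‖x‖])
  have he' : 0 < √e := Real.sqrt_pos.mpr he
  have hs0 : ∀ x : EuclideanSpace ℝ (Fin d), 0 < √(‖x‖ ^ 2 + e) := fun x =>
    he'.trans_le (hse x)
  have hxi : ∀ x : EuclideanSpace ℝ (Fin d), |x i| ≤ ‖x‖ := fun x => by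
    simpa using PiLp.norm_apply_le x i
  have hg1 : ∀ x : EuclideanSpace ℝ (Fin d), |x i / √(‖x‖ ^ 2 + e)| ≤ 1 := fun x => by
    rw [abs_div, abs_of_pos (hs0 x), div_le_one (hs0 x)]
    exact (hxi x).trans (hs1 x)
  have i1 : Integrable (fun x => (x i - m i) * (x i / √(‖x‖ ^ 2 + e))) (multiGaussian d m S) := by
    refine int_dom m hS (by fun_prop) 1 fun x => ?_
    rw [abs_mul]
    have h1 : |x i - m i| ≤ ‖x - m‖ := hxi (x - m)
    have : |x i - m i| * |x i / √(‖x‖ ^ 2 + e)| ≤ |x i - m i| :=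
      mul_le_of_le_one_right (abs_nonneg _) (hg1 x)
    nlinarith [sq_nonneg (‖x - m‖ - 1)]
  have i2 : Integrable (fun x => S i i / √(‖x‖ ^ 2 + e) -
      x i * (∑ k, S i k * x k) / √(‖x‖ ^ 2 + e) ^ 3) (multiGaussian d m S) := by
    refine int_dom m hS (by fun_prop) (2 * ‖v‖ / √e) fun x => ?_
    have hK : 0 ≤ 2 * ‖v‖ / √e := by positivity
    have b1 : |S i i / √(‖x‖ ^ 2 + e)| ≤ ‖v‖ / √e := by
      rw [abs_div, abs_of_pos (hs0 x), ← hvi]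
      exact div_le_div₀ (norm_nonneg _) (hxi v) he' (hse x)
    have b2 : |x i * (∑ k, S i k * x k) / √(‖x‖ ^ 2 + e) ^ 3| ≤ ‖v‖ / √e := by
      rw [← hinv]
      have : x i * inner ℝ x v / √(‖x‖ ^ 2 + e) ^ 3 =
        (x i / √(‖x‖ ^ 2 + e)) * ((inner ℝ x v / √(‖x‖ ^ 2 + e)) / √(‖x‖ ^ 2 + e)) := by
        have := hs0 x
        field_simp
      rw [this, abs_mul]
      refine (mul_le_of_le_one_left (abs_nonneg _) (hg1 x)).trans ?_
      rw [abs_div, abs_of_pos (hs0 x)]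
      refine div_le_div₀ (norm_nonneg _) ?_ he' (hse x)
      rw [abs_div, abs_of_pos (hs0 x), div_le_iff₀ (hs0 x)]
      refine (abs_real_inner_le_norm x v).trans ?_
      rw [mul_comm]
      exact mul_le_mul_of_nonneg_left (hs1 x) (norm_nonneg _)
    have : 2 * ‖v‖ / √e = ‖v‖ / √e + ‖v‖ / √e := by ring
    refine (abs_sub _ _).trans ?_
    nlinarith [mul_nonneg hK (sq_nonneg ‖x - m‖)]
  have i3 : Integrable (fun x : EuclideanSpace ℝ (Fin d) => x i / √(‖x‖ ^ 2 + e))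
      (multiGaussian d m S) := by
    refine int_dom m hS (by fun_prop) 1 fun x => ?_
    have := hg1 x
    nlinarith [sq_nonneg ‖x - m‖]
  refine ⟨i1, i2, ?_⟩
  rw [multiGaussian_integrable m hS] at i1 i2 i3
  rw [multiGaussian_integral m hS, multiGaussian_integral m hS]
  have key := integral_bilinear_hasLineDerivAt_right_eq_neg_left_of_integrable
    (μ := (volume : Measure (EuclideanSpace ℝ (Fin d)))) (B := ContinuousLinearMap.mul ℝ ℝ)
    (f := gpdf d m S) (f' := fun x => -(x i - m i) * gpdf d m S x)
    (g := fun x : EuclideanSpace ℝ (Fin d) => x i / √(‖x‖ ^ 2 + e))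
    (g' := fun x => S i i / √(‖x‖ ^ 2 + e) -
      x i * (∑ k, S i k * x k) / √(‖x‖ ^ 2 + e) ^ 3) (v := v)
    (by
      refine i1.neg.congr (Filter.Eventually.of_forall fun x => ?_)
      simp only [Pi.neg_apply, ContinuousLinearMap.mul_apply']
      ring)
    i2 i3 (fun x _ => gpdf_deriv m hS x i)
    (fun x _ => by
      have := g_deriv he x v i
      rwa [hvi, hinv] at this)
  simp only [ContinuousLinearMap.mul_apply'] at key
  rw [key, ← integral_neg]
  congr 1
  funext x
  ring

lemma stein_ineq {d : ℕ} (m : EuclideanSpace ℝ (Fin d))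
    {S : Matrix (Fin d) (Fin d) ℝ} (hS : S.PosDef) {e : ℝ} (he : 0 < e) :
    (S.trace - ⨆ i, hS.1.eigenvalues i) * ∫ x, 1 / √(‖x‖ ^ 2 + e) ∂(multiGaussian d m S) ≤
    ∫ x, inner ℝ (x - m) x / √(‖x‖ ^ 2 + e) ∂(multiGaussian d m S) := by
  have := int_one m hS
  have hs0 : ∀ x : EuclideanSpace ℝ (Fin d), 0 < √(‖x‖ ^ 2 + e) := fun x =>
    Real.sqrt_pos.mpr (by positivity)
  have e1 : ∫ x, inner ℝ (x - m) x / √(‖x‖ ^ 2 + e) ∂(multiGaussian d m S) =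
      ∑ i, ∫ x, (x i - m i) * (x i / √(‖x‖ ^ 2 + e)) ∂(multiGaussian d m S) := by
    rw [← integral_finsetSum _ (fun i _ => (stein m hS he i).1)]
    congr 1
    funext x
    rw [EuclideanSpace.inner_eq_star_dotProduct]
    simp only [dotProduct, Finset.sum_div]
    refine Finset.sum_congr rfl fun i _ => ?_
    simp
    ring
  rw [e1, Finset.sum_congr rfl (fun i _ => (stein m hS he i).2.2),
    ← integral_finsetSum _ (fun i _ => (stein m hS he i).2.1), ← integral_const_mul]
  refine integral_mono ?_ (integrable_finsetSum _ (fun i _ => (stein m hS he i).2.1)) fun x => ?_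
  · refine Integrable.const_mul (int_dom m hS (by fun_prop) (1 / √e) fun x => ?_) _
    have h1 : √e ≤ √(‖x‖ ^ 2 + e) := Real.sqrt_le_sqrt (by nlinarith [sq_nonneg ‖x‖])
    have he' : 0 < √e := Real.sqrt_pos.mpr he
    rw [abs_of_pos (by have := hs0 x; positivity)]
    have h2 : 1 / √(‖x‖ ^ 2 + e) ≤ 1 / √e := one_div_le_one_div_of_le he' h1
    have : 0 ≤ 1 / √e * ‖x - m‖ ^ 2 := by positivity
    linarith
  · simp only
    rw [Finset.sum_sub_distrib, ← Finset.sum_div, ← Finset.sum_div]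
    have hq := quad_le hS x
    have hs := hs0 x
    have hsq : √(‖x‖ ^ 2 + e) ^ 2 = ‖x‖ ^ 2 + e := Real.sq_sqrt (by positivity)
    set s := √(‖x‖ ^ 2 + e)
    set l := ⨆ i, hS.1.eigenvalues i with hl
    have hl0 : 0 ≤ l := Real.iSup_nonneg fun i => (hS.eigenvalues_pos i).le
    have h3 : (∑ i, x i * ∑ k, S i k * x k) / s ^ 3 ≤ l / s := by
      rw [div_le_div_iff₀ (by positivity) hs]
      have : (∑ i, x i * ∑ k, S i k * x k) ≤ l * s ^ 2 := by
        rw [hsq]; nlinarith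
      calc _ ≤ l * s ^ 2 * s := mul_le_mul_of_nonneg_right this hs.le
        _ = _ := by ring
    have h4 : S.trace = ∑ i, S i i := rfl
    rw [← h4, sub_mul, mul_one_div, mul_one_div]
    linarith

lemma stein_limit {d : ℕ} (hd : 2 ≤ d) (m : EuclideanSpace ℝ (Fin d))
    {S : Matrix (Fin d) (Fin d) ℝ} (hS : S.PosDef) :
    (S.trace - ⨆ i, hS.1.eigenvalues i) * ∫ x, 1 / ‖x‖ ∂(multiGaussian d m S) ≤
    ∫ x, inner ℝ (x - m) x / ‖x‖ ∂(multiGaussian d m S) := by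
  have := int_one m hS
  have htr := trace_sub_nonneg hd hS
  have hep : ∀ n : ℕ, (0:ℝ) < 1 / ((n:ℝ) + 1) := fun n => by positivity
  have het : Filter.Tendsto (fun n : ℕ => (1:ℝ) / ((n:ℝ) + 1)) Filter.atTop (nhds 0) :=
    tendsto_one_div_add_atTop_nhds_zero_nat
  have hst : ∀ x : EuclideanSpace ℝ (Fin d), Filter.Tendsto
      (fun n : ℕ => √(‖x‖ ^ 2 + 1 / ((n:ℝ) + 1))) Filter.atTop (nhds ‖x‖) := by
    intro x
    have := (het.const_add (‖x‖ ^ 2)).sqrt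
    rwa [add_zero, Real.sqrt_sq (norm_nonneg x)] at this
  have hle : ∀ (x : EuclideanSpace ℝ (Fin d)) (n : ℕ), ‖x‖ ≤ √(‖x‖ ^ 2 + 1 / ((n:ℝ) + 1)) :=
    fun x n => Real.le_sqrt_of_sq_le (by linarith [hep n])
  have hs0 : ∀ (x : EuclideanSpace ℝ (Fin d)) (n : ℕ), 0 < √(‖x‖ ^ 2 + 1 / ((n:ℝ) + 1)) :=
    fun x n => Real.sqrt_pos.mpr (by have := hep n; positivity)
  have hR : Filter.Tendsto (fun n : ℕ => ∫ x, inner ℝ (x - m) x / √(‖x‖ ^ 2 + 1 / ((n:ℝ) + 1))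
      ∂(multiGaussian d m S)) Filter.atTop
      (nhds (∫ x, inner ℝ (x - m) x / ‖x‖ ∂(multiGaussian d m S))) := by
    refine tendsto_integral_of_dominated_convergence (fun x => ‖x - m‖) (fun n => ?_) ?_
      (fun n => Filter.Eventually.of_forall fun x => ?_)
      (Filter.Eventually.of_forall fun x => ?_)
    · exact Measurable.aestronglyMeasurable (by fun_prop)
    · refine int_dom m hS (by fun_prop) 1 fun x => ?_
      rw [abs_norm]
      nlinarith [sq_nonneg (‖x - m‖ - 1)]
    · rw [Real.norm_eq_abs, abs_div, abs_of_pos (hs0 x n), div_le_iff₀ (hs0 x n)]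
      exact (abs_real_inner_le_norm _ _).trans
        (mul_le_mul_of_nonneg_left (hle x n) (norm_nonneg _))
    · by_cases hx : x = 0
      · simp [hx]
      · exact tendsto_const_nhds.div (hst x) (norm_ne_zero_iff.mpr hx)
  by_cases hI : Integrable (fun x : EuclideanSpace ℝ (Fin d) => 1 / ‖x‖) (multiGaussian d m S)
  · have hne : ∀ᵐ x ∂(multiGaussian d m S), x ≠ 0 := by
      have hac : multiGaussian d m S ≪ volume := withDensity_absolutelyContinuous _ _
      refine hac.ae_le ?_
      have : Nonempty (Fin d) := ⟨⟨0, by omega⟩⟩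
      have : Nontrivial (EuclideanSpace ℝ (Fin d)) := inferInstance
      exact Measure.ae_ne volume 0
    have hL : Filter.Tendsto (fun n : ℕ => ∫ x, 1 / √(‖x‖ ^ 2 + 1 / ((n:ℝ) + 1))
        ∂(multiGaussian d m S)) Filter.atTop
        (nhds (∫ x, 1 / ‖x‖ ∂(multiGaussian d m S))) := by
      refine tendsto_integral_of_dominated_convergence (fun x => 1 / ‖x‖) (fun n => ?_) hI
        (fun n => ?_) ?_
      · exact Measurable.aestronglyMeasurable (by fun_prop)
      · filter_upwards [hne] with x hx
        rw [Real.norm_of_nonneg (by have := hs0 x n; positivity)]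
        exact one_div_le_one_div_of_le (norm_pos_iff.mpr hx) (hle x n)
      · filter_upwards [hne] with x hx
        exact tendsto_const_nhds.div (hst x) (norm_ne_zero_iff.mpr hx)
    exact le_of_tendsto_of_tendsto' (hL.const_mul _) hR fun n => stein_ineq m hS (hep n)
  · rw [integral_undef hI, mul_zero]
    refine ge_of_tendsto' hR fun n => ?_
    refine le_trans ?_ (stein_ineq m hS (hep n))
    exact mul_nonneg htr (integral_nonneg fun x => by positivity)

lemma pointwise_bound {d : ℕ} (m x : EuclideanSpace ℝ (Fin d)) (c : ℝ) :
    ‖(1 - c / ‖x‖) • x - m‖ ^ 2 ≤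
      (‖x - m‖ ^ 2 + c ^ 2) - 2 * c * (inner ℝ (x - m) x / ‖x‖) := by
  by_cases hx : x = 0
  · simp [hx]; positivity
  have hn : 0 < ‖x‖ := norm_pos_iff.mpr hx
  have : (1 - c / ‖x‖) • x - m = (x - m) - (c / ‖x‖) • x := by
    rw [sub_smul, one_smul]; abel
  rw [this, norm_sub_sq_real, inner_smul_right, norm_smul, mul_pow, Real.norm_eq_abs, sq_abs]
  apply le_of_eq
  field_simp
  ring

/-- Risk comparison for the shrinkage estimator `(1 - c/|X|) X` of the mean `m` of a
nondegenerate Gaussian vector `X` in `ℝ^d`: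
`E|(1 - c/|X|)X - m|² ≤ E|X - m|² + c² - 2c (tr Σ - λ_max(Σ)) E[1/|X|]`. -/
theorem shrinkage_risk_bound (d : ℕ) (hd : 2 ≤ d)
    (m : EuclideanSpace ℝ (Fin d)) (S : Matrix (Fin d) (Fin d) ℝ)
    (hS : S.PosDef) (c : ℝ) (hc : 0 < c) :
    ∫ x, ‖(1 - c / ‖x‖) • x - m‖ ^ 2 ∂(multiGaussian d m S)
      ≤ (∫ x, ‖x - m‖ ^ 2 ∂(multiGaussian d m S)) + c ^ 2
        - 2 * c * (S.trace - ⨆ i, hS.1.eigenvalues i)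
            * ∫ x, 1 / ‖x‖ ∂(multiGaussian d m S) := by
  have := int_one m hS
  have h2 : Integrable (fun x => ‖x - m‖ ^ 2) (multiGaussian d m S) := by
    refine int_dom m hS (by fun_prop) 1 fun x => ?_
    rw [abs_of_nonneg (by positivity)]
    linarith
  have h3 : Integrable (fun x => inner ℝ (x - m) x / ‖x‖) (multiGaussian d m S) := by
    refine int_dom m hS (by fun_prop) 1 fun x => ?_
    have : |inner ℝ (x - m) x / ‖x‖| ≤ ‖x - m‖ := by
      rw [abs_div, abs_norm]
      exact div_le_of_le_mul₀ (norm_nonneg _) (norm_nonneg _) (abs_real_inner_le_norm _ _)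
    nlinarith [sq_nonneg (‖x - m‖ - 1)]
  have h4 : Integrable (fun x => ‖x - m‖ ^ 2 + c ^ 2) (multiGaussian d m S) :=
    h2.add (integrable_const _)
  have h5 : ∫ x, ‖(1 - c / ‖x‖) • x - m‖ ^ 2 ∂(multiGaussian d m S) ≤
      ∫ x, ((‖x - m‖ ^ 2 + c ^ 2) - 2 * c * (inner ℝ (x - m) x / ‖x‖))
        ∂(multiGaussian d m S) :=
    integral_mono_of_nonneg (Filter.Eventually.of_forall fun x => by positivity)
      (h4.sub (h3.const_mul _)) (Filter.Eventually.of_forall fun x => pointwise_bound m x c)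
  rw [integral_sub h4 (h3.const_mul _), integral_add h2 (integrable_const _),
    integral_const_mul, integral_const, probReal_univ, one_smul] at h5
  have h6 := mul_le_mul_of_nonneg_left (stein_limit hd m hS) (by positivity : 0 ≤ 2 * c)
  rw [← mul_assoc] at h6
  linarith
end
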